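/- Let 0 ≠ μ ∈ V_n be a symmetric Leibniz algebra structure on ℂ^n with M_μ = c·I + D for some c ∈ ℝ and some D ∈ Der(μ), and set 𝔩₀ := ker D. Then: (a) 𝔩₀ is a subalgebra, i.e., μ(𝔩₀, 𝔩₀) ⊆ 𝔩₀; and (b) if 𝔥 := span{μ(A,B) : A,B ∈ 𝔩₀} and 𝔷 denotes the orthogonal complement of 𝔥 inside 𝔩₀, then μ(Z,A) = μ(A,Z) = 0 for every Z ∈ 𝔷 and every A ∈ 𝔩₀, i.e., 𝔷 is contained in the center of the subalgebra 𝔩₀. -/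

import Mathlib

/-!
The proof is the moment-map argument. With the Hermitian form `⟪μ, ν⟫ = ∑ ⟪μ(eᵢ,eⱼ), ν(eᵢ,eⱼ)⟫` on
bilinear maps, the action of `T*` is adjoint to that of `T` and `tr (M_μ A) = 2 ⟪μ, A.μ⟫`.
If `T` is a derivation commuting with `D = M_μ - c I`, then `tr (M_μ [T, T*]) = 0`, while
`⟪μ, [T, T*].μ⟫ = ⟪μ, T.(T*.μ)⟫ = ‖T*.μ‖²`; hence `T*` is a derivation too
(`isDer_adjoint`).

For a symmetric Leibniz algebra both `L_A` and `R_A` are derivations, and they commute with `D` when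
`A ∈ ker D`; so `L_A*` and `R_A*` are derivations preserving `ker D`. If `Z ∈ ker D` is orthogonal
to all products of elements of `ker D`, then `L_A* Z = R_A* Z = 0`, so `L_A*`, `R_A*` commute with
`L_Z` and `R_Z`. Taking adjoints, the derivation `L_Z*` commutes with `L_A` and `R_A`, which
says that `B = L_Z* A` has `L_B = R_B = 0`. Then `‖B‖² = ⟪A, μ(Z,B)⟫ = 0`, so `L_Z*` vanishes on
`ker D`, and `‖μ(Z,A)‖² = ⟪A, L_Z* μ(Z,A)⟫ = 0`. The same argument applies to `R_Z`.
-/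


open scoped InnerProductSpace ComplexOrder
open LinearMap

noncomputable section

abbrev E (n : ℕ) := EuclideanSpace ℂ (Fin n)

abbrev Vb (n : ℕ) := E n →ₗ[ℂ] E n →ₗ[ℂ] E n

def e (n : ℕ) (i : Fin n) : E n := EuclideanSpace.single i 1

def Lop {n : ℕ} (μ : Vb n) (X : E n) : E n →ₗ[ℂ] E n := μ X

def Rop {n : ℕ} (μ : Vb n) (X : E n) : E n →ₗ[ℂ] E n := μ.flip X

def Mmap {n : ℕ} (μ : Vb n) : E n →ₗ[ℂ] E n :=
  (2 : ℂ) • ∑ i, Lop μ (e n i) ∘ₗ adjoint (Lop μ (e n i))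
  - (2 : ℂ) • ∑ i, adjoint (Lop μ (e n i)) ∘ₗ Lop μ (e n i)
  - (2 : ℂ) • ∑ i, adjoint (Rop μ (e n i)) ∘ₗ Rop μ (e n i)

/-- `A` is a derivation of `μ`. -/
def IsDer {n : ℕ} (μ : Vb n) (A : E n →ₗ[ℂ] E n) : Prop :=
  ∀ X Y, A (μ X Y) = μ (A X) Y + μ X (A Y)

def normSq {n : ℕ} (μ : Vb n) : ℝ :=
  ∑ i, ∑ j, ∑ k, ‖(⟪e n k, μ (e n i) (e n j)⟫_ℂ : ℂ)‖ ^ 2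

/-- `μ` is a left Leibniz algebra structure. -/
def IsLeftLeibniz {n : ℕ} (μ : Vb n) : Prop :=
  ∀ x y z : E n, μ x (μ y z) = μ (μ x y) z + μ y (μ x z)

/-- `μ` is a symmetric Leibniz algebra structure. -/
def IsSymLeibniz {n : ℕ} (μ : Vb n) : Prop :=
  IsLeftLeibniz μ ∧ ∀ x y z : E n, μ (μ x y) z = μ (μ x z) y + μ x (μ y z)

/-- The span of all products `μ(x,y)` with `x ∈ P`, `y ∈ Q`. -/
def prodSpan {n : ℕ} (μ : Vb n) (P Q : Submodule ℂ (E n)) : Submodule ℂ (E n) :=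
  Submodule.span ℂ (Set.image2 (fun x y => μ x y) (P : Set (E n)) (Q : Set (E n)))

/-- The infinitesimal action `T.ν = T ν(·,·) - ν(T·,·) - ν(·,T·)`. -/
def act {n : ℕ} (T : E n →ₗ[ℂ] E n) (ν : Vb n) : Vb n :=
  ν.compr₂ T - ν ∘ₗ T - ν.compl₂ T

lemma act_apply {n : ℕ} (T : E n →ₗ[ℂ] E n) (ν : Vb n) (x y : E n) :
    act T ν x y = T (ν x y) - ν (T x) y - ν x (T y) := by
  simp [act]

lemma isDer_iff_act {n : ℕ} (T : E n →ₗ[ℂ] E n) (ν : Vb n) : IsDer ν T ↔ act T ν = 0 := by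
  constructor
  · intro h
    ext1 x; ext1 y
    rw [act_apply, h x y]
    simp
  · intro h x y
    have := act_apply T ν x y
    rw [h] at this
    simp only [LinearMap.zero_apply] at this
    rw [sub_sub] at this
    exact sub_eq_zero.mp this.symm

/-- The Hermitian form `∑ᵢⱼ ⟪μ(eᵢ,eⱼ), ν(eᵢ,eⱼ)⟫` on bilinear maps. -/
def form {n : ℕ} (μ ν : Vb n) : ℂ :=
  ∑ i, ∑ j, ⟪μ (e n i) (e n j), ν (e n i) (e n j)⟫_ℂ

lemma trace_eq {n : ℕ} (A : E n →ₗ[ℂ] E n) :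
    LinearMap.trace ℂ (E n) A = ∑ i, ⟪e n i, A (e n i)⟫_ℂ := by
  rw [LinearMap.trace_eq_sum_inner A (EuclideanSpace.basisFun (Fin n) ℂ)]
  simp [e]

lemma sum_inner_eq_trace {n : ℕ} (f g : E n →ₗ[ℂ] E n) :
    ∑ i, ⟪f (e n i), g (e n i)⟫_ℂ = LinearMap.trace ℂ (E n) (adjoint f ∘ₗ g) := by
  rw [trace_eq]
  simp [LinearMap.adjoint_inner_right]

lemma sum_inner_comp {n : ℕ} (f g T : E n →ₗ[ℂ] E n) :
    ∑ i, ⟪f (e n i), g (T (e n i))⟫_ℂ = ∑ i, ⟪f (adjoint T (e n i)), g (e n i)⟫_ℂ := by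
  have h1 := sum_inner_eq_trace f (g ∘ₗ T)
  have h2 := sum_inner_eq_trace (f ∘ₗ adjoint T) g
  simp only [LinearMap.comp_apply] at h1 h2
  rw [h1, h2, LinearMap.adjoint_comp, LinearMap.adjoint_adjoint, ← LinearMap.comp_assoc,
    LinearMap.trace_comp_comm', LinearMap.comp_assoc]

lemma form_act {n : ℕ} (μ ν : Vb n) (T : E n →ₗ[ℂ] E n) :
    form μ (act T ν) = form (act (adjoint T) μ) ν := by
  simp only [form, act_apply, inner_sub_left, inner_sub_right, Finset.sum_sub_distrib,
    LinearMap.adjoint_inner_left]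
  congr 1
  · congr 1
    rw [Finset.sum_comm, Finset.sum_comm (γ := Fin n) (f := fun i j =>
      ⟪μ (adjoint T (e n i)) (e n j), ν (e n i) (e n j)⟫_ℂ)]
    refine Finset.sum_congr rfl fun j _ => ?_
    exact sum_inner_comp (μ.flip (e n j)) (ν.flip (e n j)) T
  · exact Finset.sum_congr rfl fun i _ => sum_inner_comp (μ (e n i)) (ν (e n i)) T

/-- `M_μ` represents the moment map of the action: `tr (M_μ A) = 2 ⟪μ, A.μ⟫`. -/
lemma trace_Mmap {n : ℕ} (μ : Vb n) (A : E n →ₗ[ℂ] E n) :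
    LinearMap.trace ℂ (E n) (Mmap μ ∘ₗ A) = 2 * form μ (act A μ) := by
  have h1 : ∀ i, LinearMap.trace ℂ (E n) ((Lop μ (e n i) ∘ₗ adjoint (Lop μ (e n i))) ∘ₗ A) =
      ∑ j, ⟪μ (e n i) (e n j), A (μ (e n i) (e n j))⟫_ℂ := by
    intro i
    have := sum_inner_eq_trace (μ (e n i)) (A ∘ₗ μ (e n i))
    simp only [LinearMap.comp_apply] at this
    rw [this, LinearMap.comp_assoc, LinearMap.trace_comp_comm', LinearMap.comp_assoc]
    rfl
  have h2 : ∀ i, LinearMap.trace ℂ (E n) ((adjoint (Lop μ (e n i)) ∘ₗ Lop μ (e n i)) ∘ₗ A) =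
      ∑ j, ⟪μ (e n i) (e n j), μ (e n i) (A (e n j))⟫_ℂ := by
    intro i
    exact (sum_inner_eq_trace (μ (e n i)) (μ (e n i) ∘ₗ A)).symm
  have h3 : ∀ j, LinearMap.trace ℂ (E n) ((adjoint (Rop μ (e n j)) ∘ₗ Rop μ (e n j)) ∘ₗ A) =
      ∑ i, ⟪μ (e n i) (e n j), μ (A (e n i)) (e n j)⟫_ℂ := by
    intro j
    exact (sum_inner_eq_trace (μ.flip (e n j)) (μ.flip (e n j) ∘ₗ A)).symm
  have hsum : ∀ f : Fin n → (E n →ₗ[ℂ] E n), (∑ i, f i) ∘ₗ A = ∑ i, f i ∘ₗ A := by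
    intro f
    ext1 x
    simp [LinearMap.sum_apply]
  simp only [Mmap, LinearMap.sub_comp, LinearMap.smul_comp, hsum, map_sub, map_smul, map_sum,
    h1, h2, h3, form, act_apply, inner_sub_right, Finset.sum_sub_distrib, smul_eq_mul]
  rw [Finset.sum_comm (f := fun j i => ⟪μ (e n i) (e n j), μ (A (e n i)) (e n j)⟫_ℂ)]
  ring

lemma adjoint_Mmap {n : ℕ} (μ : Vb n) : adjoint (Mmap μ) = Mmap μ := by
  simp only [Mmap, map_sub, map_sum, map_smulₛₗ, LinearMap.adjoint_comp,
    LinearMap.adjoint_adjoint, map_ofNat]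

lemma eq_zero_of_form_self {n : ℕ} (ν : Vb n) (h : form ν ν = 0) : ν = 0 := by
  have h' : ∑ i, ∑ j, ‖ν (e n i) (e n j)‖ ^ 2 = 0 := by
    simp only [form, inner_self_eq_norm_sq_to_K] at h
    apply Complex.ofReal_injective
    push_cast
    exact h
  rw [Finset.sum_eq_zero_iff_of_nonneg (fun i _ => by positivity)] at h'
  refine (EuclideanSpace.basisFun (Fin n) ℂ).toBasis.ext fun i =>
    (EuclideanSpace.basisFun (Fin n) ℂ).toBasis.ext fun j => ?_
  have hi := h' i (Finset.mem_univ i)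
  rw [Finset.sum_eq_zero_iff_of_nonneg (fun i _ => by positivity)] at hi
  simpa [e] using hi j (Finset.mem_univ j)

/-- The adjoint of a derivation commuting with `D` is again a derivation. -/
lemma isDer_adjoint {n : ℕ} {μ : Vb n} {c : ℝ} {D : E n →ₗ[ℂ] E n}
    (hM : Mmap μ = (c : ℂ) • (LinearMap.id : E n →ₗ[ℂ] E n) + D)
    {T : E n →ₗ[ℂ] E n} (hT : IsDer μ T) (hc : D ∘ₗ T = T ∘ₗ D) : IsDer μ (adjoint T) := by
  rw [isDer_iff_act]
  apply eq_zero_of_form_self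
  rw [← form_act]
  have hbr : act (T ∘ₗ adjoint T - adjoint T ∘ₗ T) μ = act T (act (adjoint T) μ) := by
    ext1 x; ext1 y
    have hT' := hT
    simp only [IsDer] at hT'
    simp only [act_apply, LinearMap.sub_apply, LinearMap.comp_apply, map_sub, hT', map_add]
    abel
  have htr := trace_Mmap μ (T ∘ₗ adjoint T - adjoint T ∘ₗ T)
  have hz : LinearMap.trace ℂ (E n) (Mmap μ ∘ₗ (T ∘ₗ adjoint T - adjoint T ∘ₗ T)) = 0 := by
    have hMT : Mmap μ ∘ₗ T = T ∘ₗ Mmap μ := by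
      rw [hM, LinearMap.add_comp, LinearMap.comp_add, hc, LinearMap.smul_comp,
        LinearMap.comp_smul, LinearMap.id_comp, LinearMap.comp_id]
    rw [LinearMap.comp_sub, map_sub, ← LinearMap.comp_assoc, hMT, LinearMap.comp_assoc,
      LinearMap.trace_comp_comm', LinearMap.comp_assoc, sub_self]
  rw [hz, hbr] at htr
  simpa using htr.symm

/-- If `S S*` vanishes on `P`, so does `S*`; as `S` preserves `P`, then `S* S` and hence `S` vanish
on `P`. -/
lemma vanish_of_adjoint {n : ℕ} {S : E n →ₗ[ℂ] E n} {P : Submodule ℂ (E n)}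
    (hP : ∀ A ∈ P, S A ∈ P) (h : ∀ A ∈ P, S (adjoint S A) = 0) : ∀ A ∈ P, S A = 0 := by
  have h0 : ∀ A ∈ P, adjoint S A = 0 := by
    intro A hA
    rw [← inner_self_eq_zero (𝕜 := ℂ), LinearMap.adjoint_inner_left, h A hA, inner_zero_right]
  intro A hA
  rw [← inner_self_eq_zero (𝕜 := ℂ), ← LinearMap.adjoint_inner_right, h0 _ (hP A hA),
    inner_zero_right]

/-- Let `S` be a map whose adjoint is a derivation. If `S` commutes with the adjoints of `L_A` and
`R_A`, then `S* A` annihilates the algebra on both sides. -/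
lemma annihilator_of_commute {n : ℕ} {μ : Vb n} {S : E n →ₗ[ℂ] E n} (hS : IsDer μ (adjoint S))
    {A : E n} (hL : adjoint (μ A) ∘ₗ S = S ∘ₗ adjoint (μ A))
    (hR : adjoint (μ.flip A) ∘ₗ S = S ∘ₗ adjoint (μ.flip A)) (x : E n) :
    μ (adjoint S A) x = 0 ∧ μ x (adjoint S A) = 0 := by
  have hL' := congrArg adjoint hL
  have hR' := congrArg adjoint hR
  simp only [LinearMap.adjoint_comp, LinearMap.adjoint_adjoint] at hL' hR'
  have h1 := LinearMap.congr_fun hL' x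
  have h2 := LinearMap.congr_fun hR' x
  simp only [LinearMap.comp_apply, LinearMap.flip_apply] at h1 h2
  have h3 := hS A x
  have h4 := hS x A
  constructor
  · rw [h1] at h3
    simpa using h3
  · rw [h2] at h4
    simpa using h4

/-- Let `0 ≠ μ` be a symmetric Leibniz structure with `M_μ = c·I + D`, `D ∈ Der(μ)`,
and `𝔩₀ = ker D`.  Then (a) `𝔩₀` is a subalgebra, and (b) with
`𝔥 = span μ(𝔩₀,𝔩₀)` and `𝔷 = 𝔥ᗮ ∩ 𝔩₀`, every `Z ∈ 𝔷` satisfies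
`μ(Z,A) = μ(A,Z) = 0` for all `A ∈ 𝔩₀`. -/
theorem kerD_structure {n : ℕ} (μ : Vb n) (hμ : μ ≠ 0)
    (hsym : IsSymLeibniz μ)
    (c : ℝ) (D : E n →ₗ[ℂ] E n) (hDer : IsDer μ D)
    (hM : Mmap μ = (c : ℂ) • (LinearMap.id : E n →ₗ[ℂ] E n) + D) :
    (∀ A ∈ LinearMap.ker D, ∀ B ∈ LinearMap.ker D, μ A B ∈ LinearMap.ker D) ∧
    (∀ Z ∈ (prodSpan μ (LinearMap.ker D) (LinearMap.ker D))ᗮ ⊓ LinearMap.ker D,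
      ∀ A ∈ LinearMap.ker D, μ Z A = 0 ∧ μ A Z = 0) := by
  have hD : adjoint D = D := by
    have h := adjoint_Mmap μ
    rw [hM, map_add, map_smulₛₗ, Complex.conj_ofReal, LinearMap.adjoint_id] at h
    exact add_left_cancel h
  have hsub : ∀ A ∈ LinearMap.ker D, ∀ B ∈ LinearMap.ker D, μ A B ∈ LinearMap.ker D := by
    intro A hA B hB
    rw [LinearMap.mem_ker] at *
    rw [hDer, hA, hB]
    simp
  refine ⟨hsub, ?_⟩
  obtain ⟨hl, hr⟩ := hsym
  have hLder : ∀ A, IsDer μ (μ A) := fun A x y => hl A x y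
  have hRder : ∀ A, IsDer μ (μ.flip A) := fun A x y => hr x y A
  have hLc : ∀ A ∈ LinearMap.ker D, D ∘ₗ μ A = μ A ∘ₗ D := by
    intro A hA
    ext1 x
    rw [LinearMap.mem_ker] at hA
    simp [hDer A x, hA]
  have hRc : ∀ A ∈ LinearMap.ker D, D ∘ₗ μ.flip A = μ.flip A ∘ₗ D := by
    intro A hA
    ext1 x
    rw [LinearMap.mem_ker] at hA
    simp [hDer x A, hA]
  have hLa : ∀ A ∈ LinearMap.ker D, IsDer μ (adjoint (μ A)) :=
    fun A hA => isDer_adjoint hM (hLder A) (hLc A hA)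
  have hRa : ∀ A ∈ LinearMap.ker D, IsDer μ (adjoint (μ.flip A)) :=
    fun A hA => isDer_adjoint hM (hRder A) (hRc A hA)
  intro Z hZmem
  obtain ⟨hZo, hZ⟩ := Submodule.mem_inf.1 hZmem
  -- `T* Z` stays in `ker D` because `D` is Hermitian, and is orthogonal to `ker D`.
  have key : ∀ T : E n →ₗ[ℂ] E n, D ∘ₗ T = T ∘ₗ D →
      (∀ B ∈ LinearMap.ker D,
        T B ∈ prodSpan μ (LinearMap.ker D) (LinearMap.ker D)) → adjoint T Z = 0 := by
    intro T hT hTB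
    have h1 := congrArg adjoint hT
    simp only [LinearMap.adjoint_comp, hD] at h1
    have h2 : adjoint T Z ∈ LinearMap.ker D := by
      have := LinearMap.congr_fun h1 Z
      rw [LinearMap.mem_ker] at hZ ⊢
      simpa [hZ] using this.symm
    rw [← inner_self_eq_zero (𝕜 := ℂ), LinearMap.adjoint_inner_left]
    exact (Submodule.mem_orthogonal' _ _).1 hZo _ (hTB _ h2)
  have hLZ : ∀ A ∈ LinearMap.ker D, adjoint (μ A) Z = 0 := fun A hA =>
    key _ (hLc A hA) fun B hB => Submodule.subset_span ⟨A, hA, B, hB, rfl⟩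
  have hRZ : ∀ A ∈ LinearMap.ker D, adjoint (μ.flip A) Z = 0 := fun A hA =>
    key _ (hRc A hA) fun B hB => Submodule.subset_span ⟨B, hB, A, hA, rfl⟩
  have comL : ∀ T : E n →ₗ[ℂ] E n, IsDer μ T → T Z = 0 → T ∘ₗ μ Z = μ Z ∘ₗ T := by
    intro T hT hTZ
    ext1 x
    simp [hT Z x, hTZ]
  have comR : ∀ T : E n →ₗ[ℂ] E n, IsDer μ T → T Z = 0 → T ∘ₗ μ.flip Z = μ.flip Z ∘ₗ T := by
    intro T hT hTZ
    ext1 x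
    simp [hT x Z, hTZ]
  have hL0 : ∀ A ∈ LinearMap.ker D, μ Z A = 0 :=
    vanish_of_adjoint (fun A hA => hsub Z hZ A hA) fun A hA =>
      (annihilator_of_commute (hLa Z hZ) (comL _ (hLa A hA) (hLZ A hA))
        (comL _ (hRa A hA) (hRZ A hA)) Z).2
  have hR0 : ∀ A ∈ LinearMap.ker D, μ.flip Z A = 0 :=
    vanish_of_adjoint (fun A hA => hsub A hA Z hZ) fun A hA =>
      (annihilator_of_commute (hRa Z hZ) (comR _ (hLa A hA) (hLZ A hA))
        (comR _ (hRa A hA) (hRZ A hA)) Z).1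
  exact fun A hA => ⟨hL0 A hA, hR0 A hA⟩
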